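/- Under the Entropy Setup, with ρ̄ > 0, let η*(ρ,m) = m²/(2ρ) + κρ^γ/(γ−1) be the physical entropy. Then there exists a constant M > 0 depending only on γ such that for all ρ > 0, m ∈ ℝ and all ξ ∈ ℝ², |ξ ∇²η̃(ρ,m) ξᵀ| ≤ M ξ ∇²η*(ρ,m) ξᵀ, where ∇² denotes the Hessian matrix in the variables (ρ,m). -/

import Mathlib

open MeasureTheory Real Set

noncomputable section

/-- The Lions–Perthame–Tadmor weak entropy
`η̌(ρ,m) = ∫_ℝ ½ s|s| [ρ^{2θ} − (m/ρ−s)²]_+^{(3−γ)/(2(γ−1))} ds`, with `2θ = γ−1`. -/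
def etaCheck (γ ρ m : ℝ) : ℝ :=
  ∫ s : ℝ, (1/2) * s * |s| *
    (max (ρ ^ (γ - 1) - (m / ρ - s) ^ (2:ℕ)) 0) ^ ((3 - γ) / (2 * (γ - 1)))

/-- The associated weak entropy flux
`q̌(ρ,m) = ∫_ℝ ½ s|s| (θs + (1−θ)m/ρ) [ρ^{2θ} − (m/ρ−s)²]_+^{(3−γ)/(2(γ−1))} ds`. -/
def qCheck (γ ρ m : ℝ) : ℝ :=
  ∫ s : ℝ, (1/2) * s * |s| * (((γ - 1)/2) * s + (1 - (γ - 1)/2) * (m / ρ)) *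
    (max (ρ ^ (γ - 1) - (m / ρ - s) ^ (2:ℕ)) 0) ^ ((3 - γ) / (2 * (γ - 1)))

/-- Partial derivative `η̌_ρ` in the variables `(ρ,m)`. -/
def etaCheckRho (γ ρ m : ℝ) : ℝ := deriv (fun x => etaCheck γ x m) ρ

/-- Partial derivative `η̌_m` in the variables `(ρ,m)`. -/
def etaCheckM (γ ρ m : ℝ) : ℝ := deriv (fun y => etaCheck γ ρ y) m

/-- The modified entropy `η̃(ρ,m) = η̌(ρ,m) − η̌_ρ(ρ̄,0)(ρ−ρ̄) − η̌_m(ρ̄,0)m`. -/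
def etaTilde (γ ρbar ρ m : ℝ) : ℝ :=
  etaCheck γ ρ m - etaCheckRho γ ρbar 0 * (ρ - ρbar) - etaCheckM γ ρbar 0 * m

/-- The modified entropy flux
`q̃(ρ,m) = q̌(ρ,m) − η̌_ρ(ρ̄,0)m − η̌_m(ρ̄,0)(m²/ρ + p(ρ))`, `p(ρ) = κρ^γ`. -/
def qTilde (γ κ ρbar ρ m : ℝ) : ℝ :=
  qCheck γ ρ m - etaCheckRho γ ρbar 0 * m
    - etaCheckM γ ρbar 0 * (m ^ (2:ℕ) / ρ + κ * ρ ^ γ)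

/-- `η̃_ρ` in the variables `(ρ,m)`. -/
def etaTildeRho (γ ρbar ρ m : ℝ) : ℝ := deriv (fun x => etaTilde γ ρbar x m) ρ

/-- `η̃_m` in the variables `(ρ,m)`. -/
def etaTildeM (γ ρbar ρ m : ℝ) : ℝ := deriv (fun y => etaTilde γ ρbar ρ y) m

/-- Partial derivative in the first variable of a function of `(ρ,m)`. -/
def pd1 (f : ℝ → ℝ → ℝ) (ρ m : ℝ) : ℝ := deriv (fun x => f x m) ρ

/-- Partial derivative in the second variable of a function of `(ρ,m)`. -/
def pd2 (f : ℝ → ℝ → ℝ) (ρ m : ℝ) : ℝ := deriv (fun y => f ρ y) m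

/-- The quadratic form `ξ ∇²f(ρ,m) ξᵀ` of the Hessian of `f` in the variables `(ρ,m)`,
evaluated at `ξ = (ξ₁,ξ₂)`. -/
def hessQF (f : ℝ → ℝ → ℝ) (ρ m ξ₁ ξ₂ : ℝ) : ℝ :=
  ξ₁ ^ (2:ℕ) * pd1 (pd1 f) ρ m + ξ₁ * ξ₂ * (pd1 (pd2 f) ρ m + pd2 (pd1 f) ρ m)
    + ξ₂ ^ (2:ℕ) * pd2 (pd2 f) ρ m

/-- The physical entropy `η*(ρ,m) = m²/(2ρ) + κρ^γ/(γ−1)`. -/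
def etaStar (γ κ ρ m : ℝ) : ℝ := m ^ (2:ℕ) / (2 * ρ) + κ * ρ ^ γ / (γ - 1)


open scoped Topology

/-- The kernel moment `∫ φ(a + b t) tᵏ w(t) dt`. -/
def kernelMoment (w φ : ℝ → ℝ) (k : ℕ) (a b : ℝ) : ℝ :=
  ∫ t : ℝ, φ (a + b * t) * (t ^ k * w t)

/-- A Borel function on the line that is bounded on bounded intervals. -/
structure IsLocallyBoundedBorel (φ : ℝ → ℝ) : Prop where
  measurable : Measurable φ
  bounded : ∀ R : ℝ, ∃ C : ℝ, ∀ s, |s| ≤ R → |φ s| ≤ C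

/-- `φ` is Lipschitz on bounded intervals and has derivative `φ'` away from the origin. -/
structure HasDerivOffZero (φ φ' : ℝ → ℝ) : Prop where
  borel : IsLocallyBoundedBorel φ
  borel_deriv : IsLocallyBoundedBorel φ'
  lipschitz : ∀ R : ℝ, ∃ C : ℝ, 0 ≤ C ∧
    ∀ s r, |s| ≤ R → |r| ≤ R → |φ s - φ r| ≤ C * |s - r|
  hasDerivAt : ∀ s, s ≠ 0 → HasDerivAt φ (φ' s) s

theorem isLocallyBoundedBorel_sign : IsLocallyBoundedBorel Real.sign where
  measurable := by
    unfold Real.sign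
    exact Measurable.ite measurableSet_Iio measurable_const
      (Measurable.ite measurableSet_Ioi measurable_const measurable_const)
  bounded R := ⟨1, fun s _ => by
    rcases Real.sign_apply_eq s with h | h | h <;> simp [h]⟩

theorem abs_sign_le_one (s : ℝ) : |Real.sign s| ≤ 1 := by
  rcases Real.sign_apply_eq s with h | h | h <;> simp [h]

theorem isLocallyBoundedBorel_abs : IsLocallyBoundedBorel (fun s : ℝ => |s|) where
  measurable := by fun_prop
  bounded R := ⟨R, fun s hs => by simpa using hs⟩

theorem hasDerivOffZero_abs : HasDerivOffZero (fun s : ℝ => |s|) Real.sign where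
  borel := isLocallyBoundedBorel_abs
  borel_deriv := isLocallyBoundedBorel_sign
  lipschitz R := ⟨1, zero_le_one, fun s r _ _ => by
    simpa using abs_abs_sub_abs_le_abs_sub s r⟩
  hasDerivAt s hs := by
    rcases lt_or_gt_of_ne hs with h | h
    · simpa [Real.sign_of_neg h] using hasDerivAt_abs_neg h
    · simpa [Real.sign_of_pos h] using hasDerivAt_abs_pos h

theorem hasDerivOffZero_half_mul_abs :
    HasDerivOffZero (fun s : ℝ => (1 / 2) * s * |s|) (fun s => |s|) where
  borel := by
    refine ⟨by fun_prop, fun R => ⟨1 / 2 * R * R, fun s hs => ?_⟩⟩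
    rw [abs_mul, abs_mul, abs_abs, abs_of_pos (by norm_num : (0 : ℝ) < 1 / 2)]
    have hR := (abs_nonneg s).trans hs
    gcongr
  borel_deriv := isLocallyBoundedBorel_abs
  lipschitz R := by
    refine ⟨|R|, abs_nonneg R, fun s r hs hr => ?_⟩
    have hs' := hs.trans (le_abs_self R)
    have hr' := hr.trans (le_abs_self R)
    have h : (1 / 2) * s * |s| - (1 / 2) * r * |r|
        = 1 / 2 * ((s - r) * |s| + r * (|s| - |r|)) := by ring
    have h₁ : |(s - r) * abs s| ≤ |s - r| * |R| := by
      rw [abs_mul, abs_abs]; gcongr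
    have h₂ : |r * (|s| - |r|)| ≤ |R| * |s - r| := by
      rw [abs_mul]
      exact mul_le_mul hr' (abs_abs_sub_abs_le_abs_sub s r) (abs_nonneg _) (abs_nonneg _)
    have h₃ := abs_add_le ((s - r) * |s|) (r * (|s| - |r|))
    rw [h, abs_mul, abs_of_pos (by norm_num : (0 : ℝ) < 1 / 2)]
    linarith
  hasDerivAt s hs := by
    have h := ((hasDerivAt_id s).const_mul (1 / 2)).mul (hasDerivOffZero_abs.hasDerivAt s hs)
    refine h.congr_deriv ?_
    rcases lt_or_gt_of_ne hs with h | h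
    · simp [Real.sign_of_neg h, abs_of_neg h]; ring
    · simp [Real.sign_of_pos h, abs_of_pos h]; ring

/-- An integrable even kernel vanishing outside `[-1, 1]`. -/
structure IsEvenKernel (w : ℝ → ℝ) : Prop where
  integrable : Integrable w
  eq_zero : ∀ t, 1 < |t| → w t = 0
  even : ∀ t, w (-t) = w t

namespace IsEvenKernel

variable {w φ φ' : ℝ → ℝ}

theorem abs_pow_mul_le (hw : IsEvenKernel w) (k : ℕ) (t : ℝ) : |t ^ k * w t| ≤ |w t| := by
  rcases le_or_gt |t| 1 with ht | ht
  · rw [abs_mul, abs_pow]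
    exact mul_le_of_le_one_left (abs_nonneg _) (pow_le_one₀ (abs_nonneg _) ht)
  · simp [hw.eq_zero t ht]

theorem integrable_pow_mul (hw : IsEvenKernel w) (k : ℕ) :
    Integrable (fun t => t ^ k * w t) :=
  hw.integrable.abs.mono'
    ((continuous_pow k).aestronglyMeasurable.mul hw.integrable.aestronglyMeasurable)
    (Filter.Eventually.of_forall fun t => hw.abs_pow_mul_le k t)

theorem integrable_moment (hw : IsEvenKernel w) (hφ : IsLocallyBoundedBorel φ) (k : ℕ)
    (a b : ℝ) : Integrable (fun t => φ (a + b * t) * (t ^ k * w t)) := by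
  obtain ⟨C, hC⟩ := hφ.bounded (|a| + |b|)
  refine ((hw.integrable_pow_mul k).abs.const_mul |C|).mono' ?_ ?_
  · exact (hφ.measurable.comp (by fun_prop)).aestronglyMeasurable.mul
      (hw.integrable_pow_mul k).aestronglyMeasurable
  · refine Filter.Eventually.of_forall fun t => ?_
    rw [Real.norm_eq_abs, abs_mul]
    rcases le_or_gt |t| 1 with ht | ht
    · refine mul_le_mul_of_nonneg_right ((hC _ ?_).trans (le_abs_self C)) (abs_nonneg _)
      refine (abs_add_le _ _).trans ?_
      rw [abs_mul]
      gcongr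
      exact mul_le_of_le_one_right (abs_nonneg _) ht
    · simp [hw.eq_zero t ht]

theorem abs_kernelMoment_le (hw : IsEvenKernel w) (hφ : ∀ s, |φ s| ≤ 1) (k : ℕ) (a b : ℝ) :
    |kernelMoment w φ k a b| ≤ ∫ t, |w t| := by
  rw [← Real.norm_eq_abs]
  refine norm_integral_le_of_norm_le hw.integrable.abs (Filter.Eventually.of_forall fun t => ?_)
  rw [Real.norm_eq_abs, abs_mul]
  exact (mul_le_of_le_one_left (abs_nonneg _) (hφ _)).trans (hw.abs_pow_mul_le k t)

/-- The first moment of `|a + b t|` is bounded uniformly in `a`, because `t w(t)` is odd. -/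
theorem abs_kernelMoment_abs_one_le (hw : IsEvenKernel w) (a : ℝ) {b : ℝ} (hb : 0 ≤ b) :
    |kernelMoment w (fun s => |s|) 1 a b| ≤ b * ∫ t, |w t| := by
  have hodd : ∫ t, |a| * (t ^ 1 * w t) = 0 := by
    have h := integral_neg_eq_self (fun t => |a| * (t ^ 1 * w t)) volume
    have h' : (fun t => |a| * ((-t) ^ 1 * w (-t))) = fun t => -(|a| * (t ^ 1 * w t)) := by
      funext t; rw [hw.even]; ring
    rw [h', integral_neg] at h
    linarith
  have hsub : kernelMoment w (fun s => |s|) 1 a b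
      = ∫ t, (|a + b * t| * (t ^ 1 * w t) - |a| * (t ^ 1 * w t)) := by
    rw [integral_sub (hw.integrable_moment isLocallyBoundedBorel_abs 1 a b)
      ((hw.integrable_pow_mul 1).const_mul _), hodd, sub_zero]
    rfl
  rw [hsub, ← integral_const_mul, ← Real.norm_eq_abs]
  refine norm_integral_le_of_norm_le (hw.integrable.abs.const_mul b)
    (Filter.Eventually.of_forall fun t => ?_)
  rw [← sub_mul, Real.norm_eq_abs, abs_mul]
  rcases le_or_gt |t| 1 with ht | ht
  · refine mul_le_mul ?_ (hw.abs_pow_mul_le 1 t) (abs_nonneg _) hb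
    refine (abs_abs_sub_abs_le_abs_sub _ _).trans ?_
    rw [add_sub_cancel_left, abs_mul, abs_of_nonneg hb]
    exact mul_le_of_le_one_right hb ht
  · simp [hw.eq_zero t ht]

/-- Differentiation of a moment along a curve `x ↦ (a x, b x)` with `b x₀ ≠ 0`. -/
theorem hasDerivAt_kernelMoment (hw : IsEvenKernel w) (hφ : HasDerivOffZero φ φ') (k : ℕ)
    {a b : ℝ → ℝ} {a' b' x₀ : ℝ} (ha : HasStrictDerivAt a a' x₀)
    (hb : HasStrictDerivAt b b' x₀) (hb₀ : b x₀ ≠ 0) :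
    HasDerivAt (fun x => kernelMoment w φ k (a x) (b x))
      (a' * kernelMoment w φ' k (a x₀) (b x₀)
        + b' * kernelMoment w φ' (k + 1) (a x₀) (b x₀)) x₀ := by
  obtain ⟨Ka, sa, hsa, hKa⟩ := ha.hasStrictFDerivAt.exists_lipschitzOnWith
  obtain ⟨Kb, sb, hsb, hKb⟩ := hb.hasStrictFDerivAt.exists_lipschitzOnWith
  have hbd : ∀ᶠ x in 𝓝 x₀, |a x| + |b x| < |a x₀| + |b x₀| + 1 :=
    (ha.hasDerivAt.continuousAt.abs.add hb.hasDerivAt.continuousAt.abs).eventually_lt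
      continuousAt_const (lt_add_one _)
  obtain ⟨C, hC₀, hC⟩ := hφ.lipschitz (|a x₀| + |b x₀| + 1)
  have hs : sa ∩ sb ∩ {x | |a x| + |b x| < |a x₀| + |b x₀| + 1} ∈ 𝓝 x₀ :=
    Filter.inter_mem (Filter.inter_mem hsa hsb) hbd
  have hint : ∀ j, Integrable (fun t => φ' (a x₀ + b x₀ * t) * (t ^ j * w t)) :=
    fun j => hw.integrable_moment hφ.borel_deriv j _ _
  have key := hasDerivAt_integral_of_dominated_loc_of_lip (μ := volume)
    (F := fun x t => φ (a x + b x * t) * (t ^ k * w t))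
    (F' := fun t => a' * (φ' (a x₀ + b x₀ * t) * (t ^ k * w t))
      + b' * (φ' (a x₀ + b x₀ * t) * (t ^ (k + 1) * w t)))
    (bound := fun t => C * (Ka + Kb) * |t ^ k * w t|) hs
    (Filter.Eventually.of_forall fun x =>
      (hw.integrable_moment hφ.borel k _ _).aestronglyMeasurable)
    (hw.integrable_moment hφ.borel k _ _)
    (((hint k).const_mul a').add ((hint (k + 1)).const_mul b')).aestronglyMeasurable
    ?_ ((hw.integrable_pow_mul k).abs.const_mul _) ?_
  · refine key.2.congr_deriv ?_
    rw [integral_add ((hint k).const_mul a') ((hint (k + 1)).const_mul b'),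
      integral_const_mul, integral_const_mul]
    rfl
  · refine Filter.Eventually.of_forall fun t => LipschitzOnWith.of_dist_le_mul ?_
    rintro x ⟨⟨hxa, hxb⟩, hx⟩ y ⟨⟨hya, hyb⟩, hy⟩
    rcases le_or_gt |t| 1 with ht | ht
    · have hle : ∀ z, |a z| + |b z| < |a x₀| + |b x₀| + 1 →
          |a z + b z * t| ≤ |a x₀| + |b x₀| + 1 := fun z hz => by
        refine (abs_add_le _ _).trans (le_trans ?_ hz.le)
        rw [abs_mul]
        gcongr
        exact mul_le_of_le_one_right (abs_nonneg _) ht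
      have hda := hKa.dist_le_mul x hxa y hya
      have hdb := hKb.dist_le_mul x hxb y hyb
      rw [Real.dist_eq] at hda hdb
      have hdiff : |a x + b x * t - (a y + b y * t)| ≤ (Ka + Kb) * dist x y := by
        have h₁ := abs_add_le (a x - a y) ((b x - b y) * t)
        have h₂ : |(b x - b y) * t| ≤ |b x - b y| := by
          rw [abs_mul]
          exact mul_le_of_le_one_right (abs_nonneg _) ht
        rw [show a x + b x * t - (a y + b y * t) = a x - a y + (b x - b y) * t by ring]
        linarith
      rw [Real.dist_eq, ← sub_mul, abs_mul, Real.coe_nnabs,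
        abs_of_nonneg (by positivity : 0 ≤ C * (Ka + Kb) * |t ^ k * w t|)]
      calc _ ≤ C * ((Ka + Kb) * dist x y) * |t ^ k * w t| := by
            gcongr
            exact (hC _ _ (hle x hx) (hle y hy)).trans (by gcongr)
        _ = _ := by ring
    · simp [hw.eq_zero t ht]
  · have hne : ∀ᵐ t : ℝ, t ≠ -a x₀ / b x₀ := by
      simp [ae_iff, measure_singleton]
    filter_upwards [hne] with t ht
    have h₀ : a x₀ + b x₀ * t ≠ 0 := fun h => ht (by field_simp; linarith)
    have hin : HasDerivAt (fun x => a x + b x * t) (a' + b' * t) x₀ :=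
      ha.hasDerivAt.add (hb.hasDerivAt.mul_const t)
    refine (((hφ.hasDerivAt _ h₀).comp x₀ hin).mul_const _).congr_deriv ?_
    ring

end IsEvenKernel

section PhysicalVariables

variable {x : ℝ}

theorem hasStrictDerivAt_velocity_fst (hx : x ≠ 0) (y : ℝ) :
    HasStrictDerivAt (fun z => y / z) (-(y / x) / x) x := by
  refine ((hasStrictDerivAt_inv hx).const_mul y).congr_deriv ?_
  field_simp

theorem hasStrictDerivAt_velocity_snd (x y : ℝ) :
    HasStrictDerivAt (fun z => z / x) (1 / x) y :=
  (hasStrictDerivAt_id y).div_const x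

theorem hasStrictDerivAt_rpow_div (θ : ℝ) (hx : 0 < x) :
    HasStrictDerivAt (fun z : ℝ => z ^ θ) (θ * x ^ θ / x) x := by
  refine (Real.hasStrictDerivAt_rpow_const_of_ne hx.ne' θ).congr_deriv ?_
  rw [Real.rpow_sub_one hx.ne']
  ring

end PhysicalVariables

section Hessian

variable {w : ℝ → ℝ} {f : ℝ → ℝ → ℝ} {θ A B r : ℝ}

/-- `f` is, up to an affine function, `(ρ, m) ↦ ρ ∫ ½ s|s| w(t) dt` with `s = m/ρ + ρ^θ t`. -/
def IsKernelEntropy (w : ℝ → ℝ) (θ A B r : ℝ) (f : ℝ → ℝ → ℝ) : Prop :=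
  ∀ x y : ℝ, 0 < x →
    f x y = x * kernelMoment w (fun s => (1 / 2) * s * |s|) 0 (y / x) (x ^ θ)
      - A * (x - r) - B * y

theorem IsKernelEntropy.pd2_eq (hw : IsEvenKernel w) (hf : IsKernelEntropy w θ A B r f)
    {x : ℝ} (hx : 0 < x) (y : ℝ) :
    pd2 f x y = kernelMoment w (fun s => |s|) 0 (y / x) (x ^ θ) - B := by
  have hc : x ^ θ ≠ 0 := (Real.rpow_pos_of_pos hx θ).ne'
  have h := hw.hasDerivAt_kernelMoment hasDerivOffZero_half_mul_abs 0
    (hasStrictDerivAt_velocity_snd x y) (hasStrictDerivAt_const y (x ^ θ)) hc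
  have h' := (((h.const_mul x).sub_const (A * (x - r))).sub
    ((hasDerivAt_id y).const_mul B))
  have hfun : (fun y => f x y) = _ := funext fun y => hf x y hx
  rw [pd2, hfun]
  refine h'.deriv.trans ?_
  field_simp
  ring

theorem IsKernelEntropy.pd1_eq (hw : IsEvenKernel w) (hf : IsKernelEntropy w θ A B r f)
    {x : ℝ} (hx : 0 < x) (y : ℝ) :
    pd1 f x y = kernelMoment w (fun s => (1 / 2) * s * |s|) 0 (y / x) (x ^ θ)
      - y / x * kernelMoment w (fun s => |s|) 0 (y / x) (x ^ θ)
      + θ * x ^ θ * kernelMoment w (fun s => |s|) 1 (y / x) (x ^ θ) - A := by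
  have hc : x ^ θ ≠ 0 := (Real.rpow_pos_of_pos hx θ).ne'
  have h := hw.hasDerivAt_kernelMoment hasDerivOffZero_half_mul_abs 0
    (hasStrictDerivAt_velocity_fst hx.ne' y) (hasStrictDerivAt_rpow_div θ hx) hc
  have h' := (((hasDerivAt_id x).mul h).sub
    (((hasDerivAt_id x).sub_const r).const_mul A)).sub_const (B * y)
  have hfun : (fun x => f x y) =ᶠ[𝓝 x] _ :=
    (eventually_gt_nhds hx).mono fun z hz => hf z y hz
  rw [pd1, hfun.deriv_eq]
  refine h'.deriv.trans ?_
  simp only [id, zero_add]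
  field_simp
  ring

theorem IsKernelEntropy.pd2_pd2_eq (hw : IsEvenKernel w) (hf : IsKernelEntropy w θ A B r f)
    {x : ℝ} (hx : 0 < x) (y : ℝ) :
    pd2 (pd2 f) x y = kernelMoment w Real.sign 0 (y / x) (x ^ θ) / x := by
  have hc : x ^ θ ≠ 0 := (Real.rpow_pos_of_pos hx θ).ne'
  have h := (hw.hasDerivAt_kernelMoment hasDerivOffZero_abs 0
    (hasStrictDerivAt_velocity_snd x y) (hasStrictDerivAt_const y (x ^ θ)) hc).sub_const B
  have hfun : (fun y => pd2 f x y) = _ := funext fun y => hf.pd2_eq hw hx y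
  rw [pd2, hfun]
  refine h.deriv.trans ?_
  ring

theorem IsKernelEntropy.pd1_pd2_eq (hw : IsEvenKernel w) (hf : IsKernelEntropy w θ A B r f)
    {x : ℝ} (hx : 0 < x) (y : ℝ) :
    pd1 (pd2 f) x y = (-(y / x) * kernelMoment w Real.sign 0 (y / x) (x ^ θ)
      + θ * x ^ θ * kernelMoment w Real.sign 1 (y / x) (x ^ θ)) / x := by
  have hc : x ^ θ ≠ 0 := (Real.rpow_pos_of_pos hx θ).ne'
  have h := (hw.hasDerivAt_kernelMoment hasDerivOffZero_abs 0
    (hasStrictDerivAt_velocity_fst hx.ne' y) (hasStrictDerivAt_rpow_div θ hx) hc).sub_const B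
  have hfun : (fun x => pd2 f x y) =ᶠ[𝓝 x] _ :=
    (eventually_gt_nhds hx).mono fun z hz => hf.pd2_eq hw hz y
  rw [pd1, hfun.deriv_eq]
  refine h.deriv.trans ?_
  simp only [zero_add]
  ring

theorem IsKernelEntropy.pd2_pd1_eq (hw : IsEvenKernel w) (hf : IsKernelEntropy w θ A B r f)
    {x : ℝ} (hx : 0 < x) (y : ℝ) :
    pd2 (pd1 f) x y = (-(y / x) * kernelMoment w Real.sign 0 (y / x) (x ^ θ)
      + θ * x ^ θ * kernelMoment w Real.sign 1 (y / x) (x ^ θ)) / x := by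
  have hc : x ^ θ ≠ 0 := (Real.rpow_pos_of_pos hx θ).ne'
  have hu := hasStrictDerivAt_velocity_snd x y
  have hk := hasStrictDerivAt_const y (x ^ θ)
  have h := (((hw.hasDerivAt_kernelMoment hasDerivOffZero_half_mul_abs 0 hu hk hc).sub
    (hu.hasDerivAt.mul (hw.hasDerivAt_kernelMoment hasDerivOffZero_abs 0 hu hk hc))).add
    ((hw.hasDerivAt_kernelMoment hasDerivOffZero_abs 1 hu hk hc).const_mul
      (θ * x ^ θ))).sub_const A
  have hfun : (fun y => pd1 f x y) = _ := funext fun y => hf.pd1_eq hw hx y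
  rw [pd2, hfun]
  refine h.deriv.trans ?_
  ring

theorem IsKernelEntropy.pd1_pd1_eq (hw : IsEvenKernel w) (hf : IsKernelEntropy w θ A B r f)
    {x : ℝ} (hx : 0 < x) (y : ℝ) :
    pd1 (pd1 f) x y = ((y / x) ^ 2 * kernelMoment w Real.sign 0 (y / x) (x ^ θ)
      - 2 * (y / x) * (θ * x ^ θ) * kernelMoment w Real.sign 1 (y / x) (x ^ θ)
      + (θ * x ^ θ) ^ 2 * kernelMoment w Real.sign 2 (y / x) (x ^ θ)
      + θ * (1 + θ) * x ^ θ * kernelMoment w (fun s => |s|) 1 (y / x) (x ^ θ)) / x := by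
  have hc : x ^ θ ≠ 0 := (Real.rpow_pos_of_pos hx θ).ne'
  have hu := hasStrictDerivAt_velocity_fst hx.ne' y
  have hk := hasStrictDerivAt_rpow_div θ hx
  have h := (((hw.hasDerivAt_kernelMoment hasDerivOffZero_half_mul_abs 0 hu hk hc).sub
    (hu.hasDerivAt.mul (hw.hasDerivAt_kernelMoment hasDerivOffZero_abs 0 hu hk hc))).add
    ((hk.hasDerivAt.const_mul θ).mul
      (hw.hasDerivAt_kernelMoment hasDerivOffZero_abs 1 hu hk hc))).sub_const A
  have hfun : (fun x => pd1 f x y) =ᶠ[𝓝 x] _ :=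
    (eventually_gt_nhds hx).mono fun z hz => hf.pd1_eq hw hz y
  rw [pd1, hfun.deriv_eq]
  refine h.deriv.trans ?_
  simp only [zero_add, Nat.reduceAdd]
  ring

theorem IsKernelEntropy.hessQF_eq (hw : IsEvenKernel w) (hf : IsKernelEntropy w θ A B r f)
    {x : ℝ} (hx : 0 < x) (y ξ₁ ξ₂ : ℝ) :
    hessQF f x y ξ₁ ξ₂ =
      ((ξ₂ - y / x * ξ₁) ^ 2 * kernelMoment w Real.sign 0 (y / x) (x ^ θ)
      + 2 * ((ξ₂ - y / x * ξ₁) * (θ * x ^ θ * ξ₁)) * kernelMoment w Real.sign 1 (y / x) (x ^ θ)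
      + (θ * x ^ θ * ξ₁) ^ 2 * kernelMoment w Real.sign 2 (y / x) (x ^ θ)
      + θ * (1 + θ) * x ^ θ * ξ₁ ^ 2
        * kernelMoment w (fun s => |s|) 1 (y / x) (x ^ θ)) / x := by
  rw [hessQF, hf.pd1_pd1_eq hw hx, hf.pd1_pd2_eq hw hx, hf.pd2_pd1_eq hw hx,
    hf.pd2_pd2_eq hw hx]
  ring

theorem IsKernelEntropy.abs_hessQF_le (hw : IsEvenKernel w) (hf : IsKernelEntropy w θ A B r f)
    (hθ : 0 < θ) {x : ℝ} (hx : 0 < x) (y ξ₁ ξ₂ : ℝ) :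
    |hessQF f x y ξ₁ ξ₂| ≤ (∫ t, |w t|) * (3 + 1 / θ)
      * (((ξ₂ - y / x * ξ₁) ^ 2 + (θ * x ^ θ * ξ₁) ^ 2) / x) := by
  have hc : 0 < x ^ θ := Real.rpow_pos_of_pos hx θ
  have hW : 0 ≤ ∫ t, |w t| := integral_nonneg fun t => abs_nonneg _
  have h₀ := hw.abs_kernelMoment_le abs_sign_le_one 0 (y / x) (x ^ θ)
  have h₁ := hw.abs_kernelMoment_le abs_sign_le_one 1 (y / x) (x ^ θ)
  have h₂ := hw.abs_kernelMoment_le abs_sign_le_one 2 (y / x) (x ^ θ)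
  have h₃ := hw.abs_kernelMoment_abs_one_le (y / x) hc.le
  rw [hf.hessQF_eq hw hx, abs_div, abs_of_pos hx, ← mul_div_assoc]
  gcongr
  set W := ∫ t, |w t|
  set c := x ^ θ
  set a := ξ₂ - y / x * ξ₁
  set k₀ := kernelMoment w Real.sign 0 (y / x) c
  set k₁ := kernelMoment w Real.sign 1 (y / x) c
  set k₂ := kernelMoment w Real.sign 2 (y / x) c
  set k₃ := kernelMoment w (fun s => |s|) 1 (y / x) c
  have e₀ : |a ^ 2 * k₀| ≤ a ^ 2 * W := by
    rw [abs_mul, abs_of_nonneg (sq_nonneg a)]; gcongr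
  have e₁ : |2 * (a * (θ * c * ξ₁)) * k₁| ≤ (a ^ 2 + (θ * c * ξ₁) ^ 2) * W := by
    rw [abs_mul]
    refine mul_le_mul ?_ h₁ (abs_nonneg _) (by positivity)
    rw [abs_le]
    constructor <;> nlinarith [sq_nonneg (a - θ * c * ξ₁), sq_nonneg (a + θ * c * ξ₁)]
  have e₂ : |(θ * c * ξ₁) ^ 2 * k₂| ≤ (θ * c * ξ₁) ^ 2 * W := by
    rw [abs_mul, abs_of_nonneg (sq_nonneg _)]; gcongr
  have e₃ : |θ * (1 + θ) * c * ξ₁ ^ 2 * k₃| ≤ (1 + 1 / θ) * (θ * c * ξ₁) ^ 2 * W := by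
    rw [abs_mul, abs_of_nonneg (by positivity : 0 ≤ θ * (1 + θ) * c * ξ₁ ^ 2)]
    calc _ ≤ θ * (1 + θ) * c * ξ₁ ^ 2 * (c * W) := by gcongr
      _ = _ := by field_simp; ring
  have hsum : |a ^ 2 * k₀ + 2 * (a * (θ * c * ξ₁)) * k₁ + (θ * c * ξ₁) ^ 2 * k₂
        + θ * (1 + θ) * c * ξ₁ ^ 2 * k₃|
      ≤ |a ^ 2 * k₀| + |2 * (a * (θ * c * ξ₁)) * k₁| + |(θ * c * ξ₁) ^ 2 * k₂|
        + |θ * (1 + θ) * c * ξ₁ ^ 2 * k₃| :=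
    (abs_add_le _ _).trans (add_le_add_left (abs_add_three _ _ _) _)
  have hrest : 0 ≤ (1 + 1 / θ) * a ^ 2 * W := by positivity
  linarith

end Hessian

/-- The Hessian of the physical entropy, with `θ = (γ - 1) / 2`. -/
theorem hessQF_etaStar {γ κ : ℝ} (hγ : 1 < γ) (hκ : κ = (γ - 1) ^ (2 : ℕ) / (4 * γ))
    {x : ℝ} (hx : 0 < x) (y ξ₁ ξ₂ : ℝ) :
    hessQF (fun x y => etaStar γ κ x y) x y ξ₁ ξ₂
      = ((ξ₂ - y / x * ξ₁) ^ 2 + ((γ - 1) / 2 * x ^ ((γ - 1) / 2) * ξ₁) ^ 2) / x := by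
  have hγ₁ : γ - 1 ≠ 0 := by linarith
  have hγ₀ : γ ≠ 0 := by linarith
  have h1 : ∀ z y : ℝ, 0 < z → HasDerivAt (fun x => etaStar γ κ x y)
      (-(y ^ 2 / 2) * (z ^ 2)⁻¹ + κ / (γ - 1) * (γ * z ^ (γ - 1))) z := fun z y hz => by
    have h := ((hasDerivAt_inv hz.ne').const_mul (y ^ 2 / 2)).add
      ((Real.hasDerivAt_rpow_const (p := γ) (Or.inl hz.ne')).const_mul (κ / (γ - 1)))
    refine (h.congr_deriv (by ring)).congr_of_eventuallyEq (Filter.Eventually.of_forall fun x => ?_)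
    simp only [etaStar, Pi.add_apply]
    ring
  have h2 : ∀ z y : ℝ, 0 < z → HasDerivAt (fun y => etaStar γ κ z y) (y / z) y :=
    fun z y hz => by
    have h := (((hasDerivAt_pow 2 y).div_const (2 * z))).add_const (κ * z ^ γ / (γ - 1))
    refine h.congr_deriv ?_
    field_simp
    simp
  have e22 : pd2 (pd2 fun x y => etaStar γ κ x y) x y = 1 / x := by
    have hfun : (fun y => pd2 (fun x y => etaStar γ κ x y) x y) = fun y => y / x :=
      funext fun y => (h2 x y hx).deriv
    rw [pd2, hfun]
    exact ((hasDerivAt_id y).div_const x).deriv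
  have e12 : pd1 (pd2 fun x y => etaStar γ κ x y) x y = -(y / x) / x := by
    have hfun : (fun x => pd2 (fun x y => etaStar γ κ x y) x y) =ᶠ[𝓝 x] fun x => y / x :=
      (eventually_gt_nhds hx).mono fun z hz => (h2 z y hz).deriv
    rw [pd1, hfun.deriv_eq]
    exact (hasStrictDerivAt_velocity_fst hx.ne' y).hasDerivAt.deriv
  have e21 : pd2 (pd1 fun x y => etaStar γ κ x y) x y = -(y / x) / x := by
    have hfun : (fun y => pd1 (fun x y => etaStar γ κ x y) x y) = _ :=
      funext fun y => (h1 x y hx).deriv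
    rw [pd2, hfun]
    have h := ((((hasDerivAt_pow 2 y).div_const 2).neg.mul_const (x ^ 2)⁻¹)).add_const
      (κ / (γ - 1) * (γ * x ^ (γ - 1)))
    refine h.deriv.trans ?_
    field_simp
    simp
  have e11 : pd1 (pd1 fun x y => etaStar γ κ x y) x y
      = ((y / x) ^ 2 + ((γ - 1) / 2 * x ^ ((γ - 1) / 2)) ^ 2) / x := by
    have hfun : (fun x => pd1 (fun x y => etaStar γ κ x y) x y) =ᶠ[𝓝 x] _ :=
      (eventually_gt_nhds hx).mono fun z hz => (h1 z y hz).deriv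
    rw [pd1, hfun.deriv_eq]
    have h := (((hasDerivAt_pow 2 x).inv (by positivity)).const_mul (-(y ^ 2 / 2))).add
      (((Real.hasDerivAt_rpow_const (p := γ - 1) (Or.inl hx.ne')).const_mul γ).const_mul
        (κ / (γ - 1)))
    refine h.deriv.trans ?_
    have hsq : (x ^ ((γ - 1) / 2)) ^ 2 = x ^ (γ - 1) := by
      rw [← Real.rpow_mul_natCast hx.le]
      norm_num
    rw [mul_pow, hsq, Real.rpow_sub_one hx.ne' (γ - 1), hκ]
    simp only [Nat.cast_ofNat, Nat.add_one_sub_one, pow_one]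
    field_simp
    ring
  rw [hessQF, e11, e12, e21, e22]
  ring

section LionsPerthameTadmor

/-- The normalised kernel `(1 - t²)₊^p`. -/
def lptKernel (p t : ℝ) : ℝ := (max (1 - t ^ 2) 0) ^ p

theorem integrable_lptKernel {p : ℝ} (hp : -1 < p) (hp₀ : p ≠ 0) :
    Integrable (lptKernel p) := by
  have hmeas : AEStronglyMeasurable (lptKernel p) := by
    have : Measurable (lptKernel p) := by unfold lptKernel; fun_prop
    exact this.aestronglyMeasurable
  have hsupp : Function.support (lptKernel p) ⊆ Set.Ioc (-1) 1 := by
    intro t ht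
    by_contra h
    refine ht ?_
    have : 1 - t ^ 2 ≤ 0 := by
      by_contra hlt
      push Not at hlt
      have := abs_lt.1 ((sq_lt_one_iff_abs_lt_one t).1 (by linarith))
      exact h ⟨this.1, this.2.le⟩
    simp [lptKernel, max_eq_right this, Real.zero_rpow hp₀]
  rw [← integrableOn_iff_integrable_of_support_subset hsupp]
  have h₁ : IntervalIntegrable (fun t : ℝ => (1 - t) ^ p) volume (-1) 1 := by
    have := (intervalIntegral.intervalIntegrable_rpow' (a := 2) (b := 0) hp).comp_sub_left 1
    norm_num at this
    exact this
  have h₂ : IntervalIntegrable (fun t : ℝ => (1 + t) ^ p) volume (-1) 1 := by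
    have := (intervalIntegral.intervalIntegrable_rpow' (a := 0) (b := 2) hp).comp_add_left 1
    norm_num at this
    exact this
  have h₁' := (intervalIntegrable_iff_integrableOn_Ioc_of_le (by norm_num)).1 h₁
  have h₂' := (intervalIntegrable_iff_integrableOn_Ioc_of_le (by norm_num)).1 h₂
  have hone : IntegrableOn (fun _ : ℝ => (1 : ℝ)) (Set.Ioc (-1) 1) := by simp
  refine ((h₁'.add h₂').add hone).mono' hmeas.restrict ?_
  refine (ae_restrict_mem measurableSet_Ioc).mono fun t ht => ?_
  have hm : 0 ≤ 1 - t := by linarith [ht.2]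
  have hq : 0 < 1 + t := by linarith [ht.1]
  have hsq : max (1 - t ^ 2) 0 = (1 - t) * (1 + t) := by
    rw [max_eq_left (by nlinarith)]; ring
  have hnn₁ := Real.rpow_nonneg hm p
  have hnn₂ := Real.rpow_nonneg hq.le p
  rw [lptKernel, hsq, Real.norm_of_nonneg (by positivity)]
  simp only [Pi.add_apply]
  rcases lt_or_ge p 0 with hneg | hpos
  · rcases eq_or_lt_of_le hm with h0 | hm
    · rw [← h0, zero_mul, Real.zero_rpow hp₀]
      positivity
    · rcases le_total 0 t with ht₀ | ht₀
      · have := Real.rpow_le_rpow_of_nonpos hm (by nlinarith : 1 - t ≤ (1 - t) * (1 + t)) hneg.le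
        linarith
      · have := Real.rpow_le_rpow_of_nonpos hq (by nlinarith : 1 + t ≤ (1 - t) * (1 + t)) hneg.le
        linarith
  · have := Real.rpow_le_one (by positivity) (by nlinarith : (1 - t) * (1 + t) ≤ 1) hpos
    linarith

theorem isEvenKernel_lptKernel {p : ℝ} (hp : -1 < p) (hp₀ : p ≠ 0) :
    IsEvenKernel (lptKernel p) where
  integrable := integrable_lptKernel hp hp₀
  eq_zero t ht := by
    have : 1 < t ^ 2 := (one_lt_sq_iff_one_lt_abs t).2 ht
    rw [lptKernel, max_eq_right (by linarith), Real.zero_rpow hp₀]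
  even t := by simp [lptKernel]

theorem isEvenKernel_zero : IsEvenKernel (fun _ => 0) :=
  ⟨integrable_zero _ _ _, fun _ _ => rfl, fun _ => rfl⟩

theorem etaCheck_eq_kernelMoment {γ : ℝ} (hγ : 1 < γ) {ρ : ℝ} (hρ : 0 < ρ) (m : ℝ) :
    etaCheck γ ρ m = ρ * kernelMoment (lptKernel ((3 - γ) / (2 * (γ - 1))))
      (fun s => (1 / 2) * s * |s|) 0 (m / ρ) (ρ ^ ((γ - 1) / 2)) := by
  have hγ₁ : γ - 1 ≠ 0 := by linarith
  set p := (3 - γ) / (2 * (γ - 1)) with hp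
  set c := ρ ^ ((γ - 1) / 2) with hc
  have hc₀ : 0 < c := Real.rpow_pos_of_pos hρ _
  have hcsq : ρ ^ (γ - 1) = c ^ 2 := by
    rw [hc, ← Real.rpow_mul_natCast hρ.le]
    norm_num
  have hscale : c * (c ^ 2) ^ p = ρ := by
    rw [← hcsq, hc, ← Real.rpow_mul hρ.le, ← Real.rpow_add hρ]
    have : (γ - 1) / 2 + (γ - 1) * p = 1 := by rw [hp]; field_simp; ring
    rw [this, Real.rpow_one]
  let F : ℝ → ℝ := fun s => (1 / 2) * s * |s| * (max (ρ ^ (γ - 1) - (m / ρ - s) ^ (2 : ℕ)) 0) ^ p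
  have hshift : ∫ s, F (m / ρ + s) = ∫ s, F s := integral_add_left_eq_self F (m / ρ)
  have hdil : ∫ t, F (m / ρ + c * t) = |c⁻¹| • ∫ s, F (m / ρ + s) :=
    Measure.integral_comp_mul_left (fun s => F (m / ρ + s)) c
  have hF : ∀ t, F (m / ρ + c * t) = (c ^ 2) ^ p
      * ((1 / 2) * (m / ρ + c * t) * |m / ρ + c * t| * (t ^ 0 * lptKernel p t)) := fun t => by
    have hmax : max (ρ ^ (γ - 1) - (m / ρ - (m / ρ + c * t)) ^ (2 : ℕ)) 0
        = c ^ 2 * max (1 - t ^ 2) 0 := by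
      rw [hcsq, mul_max_of_nonneg _ _ (sq_nonneg c), mul_zero]
      congr 1
      ring
    simp only [F]
    rw [hmax, Real.mul_rpow (sq_nonneg c) (le_max_right _ _), lptKernel]
    ring
  simp only [hF] at hdil
  rw [integral_const_mul, hshift, abs_of_pos (inv_pos.2 hc₀), smul_eq_mul] at hdil
  change ∫ s, F s = ρ * ∫ t, (1 / 2) * (m / ρ + c * t) * |m / ρ + c * t| * (t ^ 0 * lptKernel p t)
  rw [eq_inv_mul_iff_mul_eq₀ hc₀.ne', ← mul_assoc, hscale] at hdil
  exact hdil.symm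

/-- For `γ = 3` the exponent vanishes and the integrand is the odd function `½ s|s|`. -/
theorem etaCheck_three (ρ m : ℝ) : etaCheck 3 ρ m = 0 := by
  have h := integral_neg_eq_self (fun s : ℝ => (1 / 2) * s * |s|) volume
  have h' : (fun s : ℝ => (1 / 2) * (-s) * |-s|) = fun s => -((1 / 2) * s * |s|) := by
    funext s; rw [abs_neg]; ring
  rw [h', integral_neg] at h
  simp only [etaCheck, sub_self, zero_div, Real.rpow_zero, mul_one]
  linarith

theorem exists_isEvenKernel_etaCheck {γ : ℝ} (hγ : 1 < γ) :
    ∃ w, IsEvenKernel w ∧ ∀ ρ m, 0 < ρ → etaCheck γ ρ m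
      = ρ * kernelMoment w (fun s => (1 / 2) * s * |s|) 0 (m / ρ) (ρ ^ ((γ - 1) / 2)) := by
  rcases eq_or_ne γ 3 with rfl | h3
  · exact ⟨_, isEvenKernel_zero, fun ρ m _ => by simp [etaCheck_three, kernelMoment]⟩
  · have hpos : 0 < 2 * (γ - 1) := by linarith
    refine ⟨_, isEvenKernel_lptKernel ?_ ?_, fun ρ m hρ => etaCheck_eq_kernelMoment hγ hρ m⟩
    · rw [lt_div_iff₀ hpos]; linarith
    · exact div_ne_zero (sub_ne_zero.2 h3.symm) hpos.ne'

end LionsPerthameTadmor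

/-- there is `M > 0` depending only on `γ` such that for every `ρ̄ > 0`,
all `ρ > 0`, `m ∈ ℝ` and `ξ ∈ ℝ²`, `|ξ ∇²η̃(ρ,m) ξᵀ| ≤ M ξ ∇²η*(ρ,m) ξᵀ`,
with `κ = (γ−1)²/(4γ)`. -/
theorem hessian_etaTilde_le_hessian_etaStar (γ : ℝ) (hγ : 1 < γ)
    (κ : ℝ) (hκ : κ = (γ - 1) ^ (2:ℕ) / (4 * γ)) :
    ∃ M : ℝ, 0 < M ∧ ∀ ρbar : ℝ, 0 < ρbar → ∀ ρ : ℝ, 0 < ρ → ∀ m ξ₁ ξ₂ : ℝ,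
      |hessQF (fun x y => etaTilde γ ρbar x y) ρ m ξ₁ ξ₂|
        ≤ M * hessQF (fun x y => etaStar γ κ x y) ρ m ξ₁ ξ₂ := by
  obtain ⟨w, hw, heq⟩ := exists_isEvenKernel_etaCheck hγ
  have hθ : 0 < (γ - 1) / 2 := by linarith
  have hW : 0 ≤ ∫ t, |w t| := integral_nonneg fun t => abs_nonneg _
  refine ⟨(∫ t, |w t|) * (3 + 1 / ((γ - 1) / 2)) + 1, by positivity, ?_⟩
  intro ρbar _ ρ hρ m ξ₁ ξ₂
  have hf : IsKernelEntropy w ((γ - 1) / 2) (etaCheckRho γ ρbar 0) (etaCheckM γ ρbar 0) ρbar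
      (fun x y => etaTilde γ ρbar x y) := fun x y hx => by
    simp only [etaTilde, heq x y hx]
  rw [hessQF_etaStar hγ hκ hρ]
  refine (hf.abs_hessQF_le hw hθ hρ m ξ₁ ξ₂).trans ?_
  gcongr
  linarith
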